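/- arXiv:math-ph/0408053 — 2 statements merged into one kernel-verified Lean document; each statement's English description precedes it below -/
import Mathlib

section
/- The center of the Lie algebra L_L is one-dimensional: it equals the line ℂ·Z_{0,0} spanned by the element Z_{0,0}. -/
/- The ladder insertion-elimination Lie algebra `L_L` of Mencattini–Kreimer,
realized as the complex vector space of finitely supported functions `ℕ × ℕ → ℂ`,
with basis elements `Z n m = single (n, m) 1` and the bilinear bracket determined
on basis elements by formula (e1). -/

noncomputable section

/-- The underlying vector space of the ladder insertion-elimination Lie algebra. -/
abbrev LL : Type := (ℕ × ℕ) →₀ ℂ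

/-- The basis element `Z_{n,m}`. -/
def Z (n m : ℕ) : LL := Finsupp.single (n, m) 1

/-- `Θ(k) = 1` if `k ≥ 0`, and `0` otherwise. -/
def theta (k : ℤ) : ℂ := if 0 ≤ k then 1 else 0

/-- The Kronecker delta `δ_{n,m}`. -/
def kdelta (n m : ℕ) : ℂ := if n = m then 1 else 0

/-- Formula (e1) for the bracket `[Z_{n,m}, Z_{l,s}]` on basis elements, where
`p = (n, m)` and `q = (l, s)`.  (The natural subtractions occurring in the indices
are truncated, but every such term is multiplied by a `theta` coefficient which
vanishes whenever truncation would occur.) -/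
def zb (p q : ℕ × ℕ) : LL :=
  theta ((q.1 : ℤ) - p.2) • Z (q.1 - p.2 + p.1) q.2
    - theta ((q.2 : ℤ) - p.1) • Z q.1 (q.2 - p.1 + p.2)
    - theta ((p.1 : ℤ) - q.2) • Z (p.1 - q.2 + q.1) p.2
    + theta ((p.2 : ℤ) - q.1) • Z p.1 (p.2 - q.1 + q.2)
    - kdelta p.2 q.1 • Z p.1 q.2 + kdelta p.1 q.2 • Z q.1 p.2

/-- The bilinear extension of formula (e1) to all of `L_L`. -/
def br (x y : LL) : LL :=
  x.sum fun p a => y.sum fun q b => (a * b) • zb p q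

end

/-!
Commuting with `Z_{N,0}` for a single large `N` already forces `x_{n,m} = 0` whenever `m > 0`: if
`N` exceeds every second index occurring in `x`, each `Z_{n,m}` occurring in it satisfies
`[Z_{n,m}, Z_{N,0}] = Z_{N-m+n,0} - Z_{n+N,m}`, so for `m > 0` the coefficient of `[x, Z_{N,0}]` at
`(n + N, m)` is `-x_{n,m}`. The case `n > 0` follows by applying the anti-automorphism
`Z_{n,m} ↦ Z_{m,n}`.
-/

/-- The transposition `Z_{n,m} ↦ Z_{m,n}` of `L_L`, as a linear equivalence; it reverses the sign
of the bracket, so it carries the condition of commuting with `Z_{0,N}` to that of commuting with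
`Z_{N,0}`. -/
noncomputable def transpose : LL ≃ₗ[ℂ] LL := Finsupp.domLCongr (Equiv.prodComm ℕ ℕ)

theorem transpose_apply (x : LL) (n m : ℕ) : transpose x (n, m) = x (m, n) := rfl

theorem transpose_Z (n m : ℕ) : transpose (Z n m) = Z m n :=
  Finsupp.domLCongr_single ..

theorem transpose_zb (p q : ℕ × ℕ) : transpose (zb p q) = -zb p.swap q.swap := by
  simp only [zb, map_add, map_sub, map_smul, transpose_Z, Prod.fst_swap, Prod.snd_swap]
  abel

theorem br_transpose (x y : LL) : br (transpose x) (transpose y) = -transpose (br x y) := by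
  have sum_transpose (z : LL) (f : ℕ × ℕ → ℂ → LL) :
      (transpose z).sum f = z.sum fun p => f p.swap :=
    Finsupp.sum_equivMapDomain (Equiv.prodComm ℕ ℕ) z f
  simp only [br, sum_transpose, map_finsuppSum, map_smul, transpose_zb, smul_neg,
    Finsupp.sum_neg, neg_neg]

theorem br_Z_right (x : LL) (l s : ℕ) : br x (Z l s) = x.sum fun p a => a • zb p (l, s) := by
  simp [br, Z, Finsupp.sum_single_index]

theorem br_smul_Z_left (c : ℂ) (n m : ℕ) (y : LL) :
    br (c • Z n m) y = y.sum fun q b => (c * b) • zb (n, m) q := by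
  simp [br, Z, Finsupp.sum_single_index]

theorem theta_natCast (n : ℕ) : theta n = 1 := by
  simp [theta]

theorem theta_neg_natCast (n : ℕ) : theta (-(n : ℤ)) = kdelta n 0 := by
  simp [theta, kdelta]

theorem kdelta_comm (n m : ℕ) : kdelta n m = kdelta m n := by
  simp only [kdelta, eq_comm]

theorem zb_zero_left (q : ℕ × ℕ) : zb (0, 0) q = 0 := by
  simp [zb, theta_natCast, theta_neg_natCast, kdelta_comm 0]

theorem br_smul_Z_zero_zero_left (c : ℂ) (y : LL) : br (c • Z 0 0) y = 0 := by
  simp only [br_smul_Z_left, zb_zero_left, smul_zero, Finsupp.sum_fun_zero]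

theorem zb_zero_right_of_lt {m N : ℕ} (h : m < N) (n : ℕ) :
    zb (n, m) (N, 0) = Z (N - m + n) 0 - Z (n + N) m := by
  have theta_pos : theta ((N : ℤ) - m) = 1 := if_pos (by lia)
  have theta_neg : theta ((m : ℤ) - N) = 0 := if_neg (by lia)
  have kdelta_ne : kdelta m N = 0 := if_neg h.ne
  simp only [zb, theta_pos, theta_neg, kdelta_ne, theta_natCast, theta_neg_natCast, Nat.cast_zero,
    zero_sub, sub_zero, Nat.sub_zero, Nat.zero_sub, zero_add, one_smul, zero_smul]
  abel

theorem br_Z_zero_right_apply {x : LL} {N : ℕ} (hN : ∀ p ∈ x.support, p.2 < N)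
    (n : ℕ) {m : ℕ} (hm : 0 < m) : br x (Z N 0) (n + N, m) = -x (n, m) := by
  have coeff : ∀ p ∈ x.support,
      (x p • zb p (N, 0)) (n + N, m) = -(if p = (n, m) then x p else 0) := by
    rintro ⟨a, b⟩ hp
    simp [zb_zero_right_of_lt (hN _ hp), Z, Finsupp.single_apply, hm.ne]
  calc br x (Z N 0) (n + N, m)
      = ∑ p ∈ x.support, (x p • zb p (N, 0)) (n + N, m) := by
        rw [br_Z_right, Finsupp.sum_apply, Finsupp.sum]
    _ = -∑ p ∈ x.support, if p = (n, m) then x p else 0 := by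
        rw [Finset.sum_congr rfl coeff, Finset.sum_neg_distrib]
    _ = -x (n, m) := by simp +contextual [eq_comm]

theorem apply_eq_zero_of_br_Z_zero_right {x : LL} (hx : ∀ N, br x (Z N 0) = 0)
    (n : ℕ) {m : ℕ} (hm : 0 < m) : x (n, m) = 0 := by
  obtain ⟨N, hN⟩ : ∃ N, ∀ p ∈ x.support, p.2 < N :=
    ⟨x.support.sup Prod.snd + 1, fun _ hp => Nat.lt_succ_of_le (Finset.le_sup hp)⟩
  simpa [hx N] using br_Z_zero_right_apply hN n hm

theorem apply_eq_zero_of_br_Z_zero_left {x : LL} (hx : ∀ N, br x (Z 0 N) = 0)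
    {n : ℕ} (hn : 0 < n) (m : ℕ) : x (n, m) = 0 := by
  have br_transpose_eq_zero (N : ℕ) : br (transpose x) (Z N 0) = 0 := by
    rw [← transpose_Z 0 N, br_transpose, hx N, map_zero, neg_zero]
  rw [← transpose_apply]
  exact apply_eq_zero_of_br_Z_zero_right br_transpose_eq_zero m hn

theorem eq_smul_Z_zero_zero_of_br_eq_zero {x : LL} (hright : ∀ N, br x (Z N 0) = 0)
    (hleft : ∀ N, br x (Z 0 N) = 0) : x = x (0, 0) • Z 0 0 := by
  rw [Z, Finsupp.smul_single_one, ← Finsupp.support_subset_singleton]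
  rintro ⟨n, m⟩ hp
  rw [Finsupp.mem_support_iff] at hp
  have hn : n = 0 := by
    by_contra hn
    exact hp (apply_eq_zero_of_br_Z_zero_left hleft (Nat.pos_of_ne_zero hn) m)
  have hm : m = 0 := by
    by_contra hm
    exact hp (apply_eq_zero_of_br_Z_zero_right hright n (Nat.pos_of_ne_zero hm))
  rw [hn, hm, Finset.mem_singleton]

/-- The center of `L_L` is one-dimensional, spanned by `Z_{0,0}`:
an element is central if and only if it is a scalar multiple of `Z_{0,0}`. -/
theorem center_eq_span_Z00 :
    ∀ x : LL, (∀ y : LL, br x y = 0) ↔ ∃ c : ℂ, x = c • Z 0 0 := by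
  intro x
  constructor
  · intro hx
    exact ⟨x (0, 0), eq_smul_Z_zero_zero_of_br_eq_zero (fun N => hx (Z N 0)) fun N => hx (Z 0 N)⟩
  · rintro ⟨c, rfl⟩
    exact br_smul_Z_zero_zero_left c
end

section
/- The derived subalgebra of L_L equals gl_+(∞): the linear span of all brackets [x, y] with x, y ∈ L_L coincides with the linear span of the elements E_{i,j} = Z_{i,j} − Z_{i+1,j+1}, i, j ∈ ℤ_{≥0}. -/
/-- The element `E_{i,j} = Z_{i,j} − Z_{i+1,j+1}` of `L_L`. -/
noncomputable def E (i j : ℕ) : LL := Z i j - Z (i + 1) (j + 1)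

/-- `gl_+(∞)`, the span of the elements `E_{i,j}`. -/
noncomputable def glInf : Submodule ℂ LL :=
  Submodule.span ℂ {x : LL | ∃ i j : ℕ, x = E i j}

/-!
On basis elements the bracket (e1) is the commutator of the product of the bicyclic monoid,
`Z_{n,m} Z_{l,s} = Z_{n+(l-m)⁺, s+(m-l)⁺}`. This product is graded by `Z_{n,m} ↦ n - m`, so
`Z_p Z_q` and `Z_q Z_p` lie on the same diagonal, and their difference telescopes into elements
`E_{i,j}`. Conversely, `[Z_{0,1}, Z_{i+1,j}] = E_{i,j}`.
-/

/-- The product `Z_p Z_q` in the algebra of the bicyclic monoid, whose element `(n, m)` is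
represented by `Z n m`. The truncated subtractions are the positive parts of the
differences. -/
noncomputable def bicyclicMul (p q : ℕ × ℕ) : LL :=
  Z (p.1 + (q.1 - p.2)) (q.2 + (p.2 - q.1))

lemma theta_smul_add_theta_smul_sub_kdelta_smul {M : Type*} [AddCommGroup M] [Module ℂ M]
    (f : ℕ → ℕ → M) (a b : ℕ) :
    theta ((a : ℤ) - b) • f (a - b) 0 + theta ((b : ℤ) - a) • f 0 (b - a) - kdelta b a • f 0 0 =
      f (a - b) (b - a) := by
  rcases lt_trichotomy a b with h | rfl | h
  · simp [theta, kdelta, h.le, h.not_ge, h.ne']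
  · simp [theta, kdelta]
  · simp [theta, kdelta, h.le, h.not_ge, h.ne]

lemma zb_eq_bicyclicMul_sub_bicyclicMul (p q : ℕ × ℕ) :
    zb p q = bicyclicMul p q - bicyclicMul q p := by
  have hpq := theta_smul_add_theta_smul_sub_kdelta_smul
    (fun i j => Z (i + p.1) (j + q.2)) q.1 p.2
  have hqp := theta_smul_add_theta_smul_sub_kdelta_smul
    (fun i j => Z (j + q.1) (i + p.2)) q.2 p.1
  simp only [zero_add] at hpq hqp
  rw [bicyclicMul, bicyclicMul, add_comm p.1, add_comm q.2, add_comm q.1, add_comm p.2,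
    ← hpq, ← hqp, zb]
  abel

lemma br_Z_Z (n m l s : ℕ) : br (Z n m) (Z l s) = zb (n, m) (l, s) := by
  simp [br, Z]

lemma br_Z_zero_one_Z_succ (i j : ℕ) : br (Z 0 1) (Z (i + 1) j) = E i j := by
  rw [br_Z_Z, zb_eq_bicyclicMul_sub_bicyclicMul]
  simp [bicyclicMul, E, add_comm]

lemma sum_range_E_add (i j k : ℕ) :
    ∑ t ∈ Finset.range k, E (i + t) (j + t) = Z i j - Z (i + k) (j + k) :=
  Finset.sum_range_sub' (fun t => Z (i + t) (j + t)) k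

lemma E_mem_glInf (i j : ℕ) : E i j ∈ glInf :=
  Submodule.subset_span ⟨i, j, rfl⟩

lemma Z_sub_Z_mem_glInf {i j k l : ℕ} (h : i + l = k + j) : Z i j - Z k l ∈ glInf := by
  wlog hik : i ≤ k generalizing i j k l
  · rw [← neg_sub]
    exact glInf.neg_mem (this h.symm (le_of_not_ge hik))
  obtain ⟨d, rfl⟩ := Nat.exists_eq_add_of_le hik
  obtain rfl : l = j + d := by omega
  rw [← sum_range_E_add]
  exact glInf.sum_mem fun t _ => E_mem_glInf (i + t) (j + t)

lemma zb_mem_glInf (p q : ℕ × ℕ) : zb p q ∈ glInf := by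
  rw [zb_eq_bicyclicMul_sub_bicyclicMul]
  exact Z_sub_Z_mem_glInf (by omega)

lemma br_mem_glInf (x y : LL) : br x y ∈ glInf :=
  glInf.sum_mem fun p _ => glInf.sum_mem fun q _ => glInf.smul_mem _ (zb_mem_glInf p q)

/-- The derived subalgebra `[L_L, L_L]` equals `gl_+(∞)`. -/
theorem derived_subalgebra_eq_glInf :
    Submodule.span ℂ {z : LL | ∃ x y : LL, z = br x y} = glInf := by
  refine le_antisymm (Submodule.span_le.2 ?_) (Submodule.span_le.2 ?_)
  · rintro _ ⟨x, y, rfl⟩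
    exact br_mem_glInf x y
  · rintro _ ⟨i, j, rfl⟩
    exact Submodule.subset_span ⟨Z 0 1, Z (i + 1) j, (br_Z_zero_one_Z_succ i j).symm⟩
end
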